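/- Let G = (V,E) be a finite graph with strictly positive edge weights x, cluster weight q ≥ 1, and E' ⊆ E; for s > 0 let P^s be the random-cluster measure with weights s on E' and x off E'. Then for every nonempty increasing event A ⊆ {0,1}^E and all 0 < s₁ < s₂: P^{s₂}(A) / P^{s₁}(A) ≥ exp( ∫_{s₁}^{s₂} (1/(s(1+s))) Σ_{e ∈ E'} P^s(e ∈ Piv_A | A) ds ). -/

import Mathlib

noncomputable section
open scoped Classical BigOperators

namespace RandomCluster

variable {V : Type*} [Fintype V] [DecidableEq V]

/-- A percolation configuration on the edge set `E`. -/
def Config (E : Finset (Sym2 V)) : Type _ := {e : Sym2 V // e ∈ E} → Bool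

instance (E : Finset (Sym2 V)) : Fintype (Config E) := by unfold Config; infer_instance

/-- The set of open edges of a configuration. -/
def openEdges {E : Finset (Sym2 V)} (ω : Config E) : Set (Sym2 V) :=
  {e | ∃ h : e ∈ E, ω ⟨e, h⟩ = true}

/-- `κ(ω)`: the number of connected components of the spanning subgraph of open edges
(isolated vertices included). -/
def kappa {E : Finset (Sym2 V)} (ω : Config E) : ℕ :=
  Nat.card (SimpleGraph.fromEdgeSet (openEdges ω)).ConnectedComponent

/-- The (unnormalized) random-cluster weight. -/
def weight (E : Finset (Sym2 V)) (x : Sym2 V → ℝ) (q : ℝ) (ω : Config E) : ℝ :=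
  q ^ kappa ω * ∏ e : {e : Sym2 V // e ∈ E}, (if ω e then x e.1 else 1)

/-- The partition function. -/
def Z (E : Finset (Sym2 V)) (x : Sym2 V → ℝ) (q : ℝ) : ℝ :=
  ∑ ω : Config E, weight E x q ω

/-- The random-cluster probability measure. -/
def prob (E : Finset (Sym2 V)) (x : Sym2 V → ℝ) (q : ℝ) (ω : Config E) : ℝ :=
  weight E x q ω / Z E x q

/-- The random-cluster measure conditioned on `{ω : ω e = i}`. -/
def condProb (E : Finset (Sym2 V)) (x : Sym2 V → ℝ) (q : ℝ) (e : {e : Sym2 V // e ∈ E})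
    (i : Bool) (ω : Config E) : ℝ :=
  if ω e = i then prob E x q ω / (∑ η : Config E, if η e = i then prob E x q η else 0) else 0

end RandomCluster


namespace RandomCluster

variable {V : Type*} [Fintype V] [DecidableEq V]

/-- The weights modified to equal `s` on every edge of `E'`. -/
def modWeights (E' : Finset (Sym2 V)) (x : Sym2 V → ℝ) (s : ℝ) : Sym2 V → ℝ :=
  fun e => if e ∈ E' then s else x e

/-- An event is increasing if it is stable under opening more edges. -/
def Increasing {E : Finset (Sym2 V)} (A : Set (Config E)) : Prop :=
  ∀ ω ω' : Config E, (∀ f, ω f ≤ ω' f) → ω ∈ A → ω' ∈ A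

/-- The edge `e` is pivotal for `A` in `ω`: exactly one of the two configurations agreeing
with `ω` off `e` lies in `A`. -/
def Pivotal {E : Finset (Sym2 V)} (A : Set (Config E)) (e : {e : Sym2 V // e ∈ E})
    (ω : Config E) : Prop :=
  Xor' (Function.update ω e true ∈ A) (Function.update ω e false ∈ A)

/-- `P^s(A)` for the measure with weights `s` on `E'` and `x` elsewhere. -/
def probOf (E E' : Finset (Sym2 V)) (x : Sym2 V → ℝ) (q s : ℝ) (A : Set (Config E)) : ℝ :=
  ∑ ω : Config E, (if ω ∈ A then prob E (modWeights E' x s) q ω else 0)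

/-- `P^s(e ∈ Piv_A | A)`. -/
def condPiv (E E' : Finset (Sym2 V)) (x : Sym2 V → ℝ) (q s : ℝ) (A : Set (Config E))
    (e : {e : Sym2 V // e ∈ E}) : ℝ :=
  (∑ ω : Config E, (if ω ∈ A ∧ Pivotal A e ω then prob E (modWeights E' x s) q ω else 0)) /
    probOf E E' x q s A

end RandomCluster

namespace RandomCluster

variable {V : Type*} [Fintype V] [DecidableEq V]

instance instDistribLatticeConfig (E : Finset (Sym2 V)) : DistribLattice (Config E) :=
  inferInstanceAs (DistribLattice ({e : Sym2 V // e ∈ E} → Bool))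

/-- Functions constant along the edges of a graph. -/
def constSub (G : SimpleGraph V) : Submodule ℝ (V → ℝ) where
  carrier := {f | ∀ i j, G.Adj i j → f i = f j}
  add_mem' := by
    intro a b ha hb i j h
    simp [ha i j h, hb i j h]
  zero_mem' := by intro i j _; rfl
  smul_mem' := by
    intro c a ha i j h
    simp [ha i j h]

lemma mem_constSub (G : SimpleGraph V) (f : V → ℝ) :
    f ∈ constSub G ↔ ∀ i j, G.Adj i j → f i = f j := Iff.rfl

lemma kappa_eq {E : Finset (Sym2 V)} (ω : Config E) :
    kappa ω = Module.finrank ℝ (constSub (SimpleGraph.fromEdgeSet (openEdges ω))) := by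
  unfold kappa
  rw [Nat.card_eq_fintype_card,
    SimpleGraph.card_connectedComponent_eq_finrank_ker_toLin'_lapMatrix]
  have : ((SimpleGraph.fromEdgeSet (openEdges ω)).lapMatrix ℝ).toLin'.ker =
      constSub (SimpleGraph.fromEdgeSet (openEdges ω)) := by
    ext f
    rw [LinearMap.mem_ker, Matrix.toLin'_apply,
      SimpleGraph.lapMatrix_mulVec_eq_zero_iff_forall_adj, mem_constSub]
  rw [this]

lemma bool_of_true_le {b : Bool} (h : true ≤ b) : b = true := by
  cases b
  · exact absurd h (by decide)
  · rfl

lemma upd_same {E : Finset (Sym2 V)} (ω : Config E) (e : {e : Sym2 V // e ∈ E}) (b : Bool) :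
    (Function.update ω e b : Config E) e = b := Function.update_self _ _ _

lemma upd_ne {E : Finset (Sym2 V)} (ω : Config E) (e f : {e : Sym2 V // e ∈ E}) (b : Bool)
    (h : f ≠ e) : (Function.update ω e b : Config E) f = ω f := Function.update_of_ne h _ _

lemma upd_idem {E : Finset (Sym2 V)} (ω : Config E) (e : {e : Sym2 V // e ∈ E}) (b c : Bool) :
    (Function.update (Function.update ω e b) e c : Config E) = (Function.update ω e c : Config E) :=
  Function.update_idem _ _ _

lemma openEdges_mono {E : Finset (Sym2 V)} {ω η : Config E} (h : ω ≤ η) :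
    openEdges ω ⊆ openEdges η := by
  rintro e ⟨he, h1⟩
  exact ⟨he, bool_of_true_le (h1 ▸ h ⟨e, he⟩)⟩

lemma openEdges_sup {E : Finset (Sym2 V)} (ω η : Config E) :
    openEdges (ω ⊔ η) = openEdges ω ∪ openEdges η := by
  ext e
  constructor
  · rintro ⟨he, h1⟩
    have h2 : (ω ⟨e, he⟩ || η ⟨e, he⟩) = true := h1
    rcases (Bool.or_eq_true _ _).mp h2 with h | h
    · exact Or.inl ⟨he, h⟩
    · exact Or.inr ⟨he, h⟩
  · rintro (h | h)
    · exact openEdges_mono le_sup_left h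
    · exact openEdges_mono le_sup_right h

lemma constSub_anti {G H : SimpleGraph V} (h : G ≤ H) : constSub H ≤ constSub G :=
  fun _ hf i j hij => hf i j (h hij)

lemma kappa_anti {E : Finset (Sym2 V)} {ω η : Config E} (h : ω ≤ η) : kappa η ≤ kappa ω := by
  rw [kappa_eq, kappa_eq]
  exact Submodule.finrank_mono (constSub_anti (SimpleGraph.fromEdgeSet_mono (openEdges_mono h)))

lemma kappa_super {E : Finset (Sym2 V)} (ω η : Config E) :
    kappa ω + kappa η ≤ kappa (ω ⊓ η) + kappa (ω ⊔ η) := by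
  rw [kappa_eq, kappa_eq, kappa_eq, kappa_eq]
  have h1 : constSub (SimpleGraph.fromEdgeSet (openEdges (ω ⊔ η))) =
      constSub (SimpleGraph.fromEdgeSet (openEdges ω)) ⊓
      constSub (SimpleGraph.fromEdgeSet (openEdges η)) := by
    ext f
    rw [openEdges_sup, Submodule.mem_inf]
    simp only [mem_constSub, SimpleGraph.fromEdgeSet_adj]
    constructor
    · intro h
      exact ⟨fun i j hij => h i j ⟨Or.inl hij.1, hij.2⟩, fun i j hij => h i j ⟨Or.inr hij.1, hij.2⟩⟩
    · rintro ⟨h, h'⟩ i j ⟨hij | hij, hne⟩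
      · exact h i j ⟨hij, hne⟩
      · exact h' i j ⟨hij, hne⟩
  have h2 : constSub (SimpleGraph.fromEdgeSet (openEdges ω)) ⊔
      constSub (SimpleGraph.fromEdgeSet (openEdges η)) ≤
      constSub (SimpleGraph.fromEdgeSet (openEdges (ω ⊓ η))) :=
    sup_le (constSub_anti (SimpleGraph.fromEdgeSet_mono (openEdges_mono inf_le_left)))
      (constSub_anti (SimpleGraph.fromEdgeSet_mono (openEdges_mono inf_le_right)))
  have h3 := Submodule.finrank_mono h2
  have h4 := Submodule.finrank_sup_add_finrank_inf_eq
    (constSub (SimpleGraph.fromEdgeSet (openEdges ω)))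
    (constSub (SimpleGraph.fromEdgeSet (openEdges η)))
  rw [h1]
  omega

lemma weight_pos {E : Finset (Sym2 V)} {y : Sym2 V → ℝ} (hy : ∀ e ∈ E, 0 < y e) {q : ℝ}
    (hq : 1 ≤ q) (ω : Config E) : 0 < weight E y q ω := by
  unfold weight
  refine mul_pos (by positivity) (Finset.prod_pos fun e _ => ?_)
  split_ifs
  · exact hy _ e.2
  · exact one_pos

lemma weight_super {E : Finset (Sym2 V)} {y : Sym2 V → ℝ} (hy : ∀ e ∈ E, 0 < y e) {q : ℝ}
    (hq : 1 ≤ q) (ω η : Config E) :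
    weight E y q ω * weight E y q η ≤ weight E y q (ω ⊓ η) * weight E y q (ω ⊔ η) := by
  unfold weight
  rw [mul_mul_mul_comm (q ^ kappa ω), mul_mul_mul_comm (q ^ kappa (ω ⊓ η)), ← pow_add, ← pow_add, ← Finset.prod_mul_distrib,
    ← Finset.prod_mul_distrib]
  have h1 : ∀ e : {e : Sym2 V // e ∈ E},
      (if (ω ⊓ η) e then y e.1 else 1) * (if (ω ⊔ η) e then y e.1 else 1) =
      (if ω e then y e.1 else 1) * (if η e then y e.1 else 1) := by
    intro e
    have a1 : (ω ⊓ η) e = (ω e && η e) := rfl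
    have a2 : (ω ⊔ η) e = (ω e || η e) := rfl
    rw [a1, a2]
    cases ω e <;> cases η e <;> simp
  simp only [h1]
  refine mul_le_mul_of_nonneg_right (pow_le_pow_right₀ hq (kappa_super ω η)) ?_
  refine Finset.prod_nonneg fun e _ => ?_
  have := hy _ e.2
  split_ifs <;> positivity

lemma upd_self {E : Finset (Sym2 V)} (ω : Config E) (e : {e : Sym2 V // e ∈ E}) (b : Bool)
    (h : ω e = b) : (Function.update ω e b : Config E) = ω := by
  subst h; exact Function.update_eq_self _ _

lemma upd_le {E : Finset (Sym2 V)} (ω : Config E) (e : {e : Sym2 V // e ∈ E}) :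
    (Function.update ω e false : Config E) ≤ ω := by
  intro f
  by_cases hf : f = e
  · subst hf; rw [upd_same]; exact Bool.false_le _
  · rw [upd_ne _ _ _ _ hf]

lemma upd_mono {E : Finset (Sym2 V)} {ω η : Config E} (h : ω ≤ η) (e : {e : Sym2 V // e ∈ E})
    (b : Bool) : (Function.update ω e b : Config E) ≤ (Function.update η e b : Config E) := by
  intro f
  by_cases hf : f = e
  · subst hf; rw [upd_same, upd_same]
  · rw [upd_ne _ _ _ _ hf, upd_ne _ _ _ _ hf]; exact h f

lemma weight_flip {E : Finset (Sym2 V)} {y : Sym2 V → ℝ} (hy : ∀ e ∈ E, 0 < y e) {q : ℝ}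
    (hq : 1 ≤ q) (ω : Config E) (e : {e : Sym2 V // e ∈ E}) (h : ω e = true) :
    weight E y q ω ≤ y e.1 * weight E y q (Function.update ω e false) := by
  have hk := kappa_anti (upd_le ω e)
  have hP : ∏ f : {e : Sym2 V // e ∈ E}, (if ω f then y f.1 else 1) =
      y e.1 * ∏ f : {e : Sym2 V // e ∈ E},
        (if (Function.update ω e false : Config E) f then y f.1 else 1) := by
    rw [← Finset.mul_prod_erase _ _ (Finset.mem_univ e), ← Finset.mul_prod_erase _
      (fun f : {e : Sym2 V // e ∈ E} =>
        (if (Function.update ω e false : Config E) f then y f.1 else 1)) (Finset.mem_univ e)]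
    have : ∀ f ∈ Finset.univ.erase e, (if ω f then y f.1 else 1) =
        (if (Function.update ω e false : Config E) f then y f.1 else 1) := by
      intro f hf
      rw [upd_ne _ _ _ _ (Finset.ne_of_mem_erase hf)]
    rw [Finset.prod_congr rfl this]
    rw [upd_same, h]
    simp
  have hpos := weight_pos hy hq ω
  unfold weight at *
  rw [hP, ← mul_assoc, mul_comm (q ^ _) (y e.1), mul_assoc]
  refine mul_le_mul_of_nonneg_left ?_ (hy _ e.2).le
  refine mul_le_mul_of_nonneg_right (pow_le_pow_right₀ hq hk) ?_
  refine Finset.prod_nonneg fun e _ => ?_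
  have := hy _ e.2
  split_ifs <;> positivity

/-- Mass of an event. -/
def mass {E : Finset (Sym2 V)} (w : Config E → ℝ) (B : Config E → Prop) : ℝ :=
  ∑ ω, if B ω then w ω else 0

lemma mass_filter {E : Finset (Sym2 V)} (w : Config E → ℝ) (B : Config E → Prop)
    [DecidablePred B] : mass w B = ∑ ω ∈ Finset.univ.filter B, w ω := by
  unfold mass
  rw [Finset.sum_filter]
  refine Finset.sum_congr rfl fun ω _ => ?_
  by_cases h : B ω <;> simp [h]

lemma piv_iff {E : Finset (Sym2 V)} (A : Set (Config E)) (e : {e : Sym2 V // e ∈ E})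
    (ω : Config E) : Pivotal A e ω ↔
      (((Function.update ω e true : Config E) ∈ A ∧ ¬ (Function.update ω e false : Config E) ∈ A) ∨
      ((Function.update ω e false : Config E) ∈ A ∧ ¬ (Function.update ω e true : Config E) ∈ A)) :=
  Iff.rfl

lemma mass_add {E : Finset (Sym2 V)} (w : Config E → ℝ) (B C D : Config E → Prop)
    (h : ∀ ω, B ω ↔ (C ω ∨ D ω)) (h' : ∀ ω, C ω → ¬ D ω) : mass w B = mass w C + mass w D := by
  unfold mass
  rw [← Finset.sum_add_distrib]
  refine Finset.sum_congr rfl fun ω _ => ?_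
  have := h ω
  have := h' ω
  by_cases hC : C ω <;> by_cases hD : D ω <;> simp_all

lemma mass_fkg {E : Finset (Sym2 V)} {y : Sym2 V → ℝ} (hy : ∀ e ∈ E, 0 < y e) {q : ℝ}
    (hq : 1 ≤ q) (B C : Config E → Prop) (hB : ∀ ω η, ω ≤ η → B ω → B η)
    (hC : ∀ ω η, ω ≤ η → C ω → C η) :
    mass (weight E y q) B * mass (weight E y q) C ≤
      mass (weight E y q) (fun _ => True) * mass (weight E y q) (fun ω => B ω ∧ C ω) := by
  have key : ∀ D : Config E → Prop, (∀ ω η, ω ≤ η → D ω → D η) →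
      Monotone (fun ω => if D ω then (1 : ℝ) else 0) := by
    intro D hD ω η h
    have := hD ω η h
    dsimp only
    by_cases h1 : D ω
    · simp [h1, this h1]
    · simp only [h1, if_false]; split_ifs <;> norm_num
  have := fkg (μ := weight E y q) (f := fun ω => if B ω then (1 : ℝ) else 0)
    (g := fun ω => if C ω then (1 : ℝ) else 0)
    (fun ω => (weight_pos hy hq ω).le)
    (fun ω => by dsimp only [Pi.zero_apply]; split_ifs <;> norm_num)
    (fun ω => by dsimp only [Pi.zero_apply]; split_ifs <;> norm_num)
    (key B hB) (key C hC) (weight_super hy hq)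
  unfold mass
  have t1 : ∀ D : Config E → Prop, (∑ ω, if D ω then weight E y q ω else 0) =
      ∑ ω, weight E y q ω * (if D ω then (1 : ℝ) else 0) := by
    intro D
    refine Finset.sum_congr rfl fun ω _ => ?_
    split_ifs <;> simp
  rw [t1 B, t1 C, t1 (fun _ => True), t1 (fun ω => B ω ∧ C ω)]
  refine this.trans (le_of_eq ?_)
  congr 1
  · simp
  · refine Finset.sum_congr rfl fun ω _ => ?_
    by_cases h1 : B ω <;> by_cases h2 : C ω <;> simp [h1, h2]

lemma mass_flip {E : Finset (Sym2 V)} {y : Sym2 V → ℝ} (hy : ∀ e ∈ E, 0 < y e) {q : ℝ}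
    (hq : 1 ≤ q) (e : {e : Sym2 V // e ∈ E}) :
    mass (weight E y q) (fun ω => ω e = true) ≤
      y e.1 * mass (weight E y q) (fun ω => ω e = false) := by
  rw [mass_filter, mass_filter, Finset.mul_sum]
  refine (Finset.sum_le_sum fun ω hω => weight_flip hy hq ω e (Finset.mem_filter.mp hω).2).trans
    (le_of_eq ?_)
  refine Finset.sum_nbij' (fun ω => Function.update ω e false)
    (fun ω => Function.update ω e true) ?_ ?_ ?_ ?_ ?_
  · intro ω hω; exact Finset.mem_filter.mpr ⟨Finset.mem_univ _, upd_same _ _ _⟩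
  · intro ω hω; exact Finset.mem_filter.mpr ⟨Finset.mem_univ _, upd_same _ _ _⟩
  · intro ω hω
    have := (Finset.mem_filter.mp hω).2
    exact (upd_idem _ _ _ _).trans (upd_self ω e _ this)
  · intro ω hω
    have := (Finset.mem_filter.mp hω).2
    exact (upd_idem _ _ _ _).trans (upd_self ω e _ this)
  · intro ω hω; rfl

lemma edge_ineq {E : Finset (Sym2 V)} {y : Sym2 V → ℝ} (hy : ∀ e ∈ E, 0 < y e) {q : ℝ}
    (hq : 1 ≤ q) (A : Set (Config E)) (hA : Increasing A) (e : {e : Sym2 V // e ∈ E}) :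
    mass (weight E y q) (fun _ => True) *
      mass (weight E y q) (fun ω => ω ∈ A ∧ Pivotal A e ω) ≤
    (1 + y e.1) * (mass (weight E y q) (fun ω => ω ∈ A ∧ ω e = true) *
        mass (weight E y q) (fun _ => True) -
      mass (weight E y q) (fun ω => ω e = true) * mass (weight E y q) (fun ω => ω ∈ A)) := by
  set w := weight E y q with hw
  set A0 : Config E → Prop := fun ω => (Function.update ω e false : Config E) ∈ A with hA0
  have hA0A : ∀ ω, A0 ω → ω ∈ A := fun ω h => hA _ _ (upd_le ω e) h
  have e1 : mass w (fun _ => True) =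
      mass w (fun ω => ω e = true) + mass w (fun ω => ω e = false) := by
    apply mass_add
    · intro ω; cases ω e <;> simp
    · intro ω h; simp [h]
  have e2 : mass w (fun ω => ω ∈ A) =
      mass w (fun ω => ω ∈ A ∧ ω e = true) + mass w (fun ω => A0 ω ∧ ω e = false) := by
    apply mass_add
    · intro ω
      cases h : ω e
      · have h1 : A0 ω ↔ ω ∈ A := by
          simp only [hA0, upd_self ω e _ h]
          exact Iff.rfl
        rw [h1]
        simp
      · simp
    · intro ω h; simp [h.2]
  have e3 : mass w (fun ω => ω ∈ A ∧ ω e = true) =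
      mass w (fun ω => ω ∈ A ∧ Pivotal A e ω) + mass w (fun ω => A0 ω ∧ ω e = true) := by
    apply mass_add
    · intro ω
      have := hA0A ω
      cases h : ω e
      · have h1 := upd_self ω e _ h
        have h2 : ω ∈ A → (Function.update ω e true : Config E) ∈ A := by
          intro h3
          refine hA ω _ ?_ h3
          intro f
          by_cases hf : f = e
          · subst hf; rw [upd_same, h]; exact Bool.false_le _
          · rw [upd_ne _ _ _ _ hf]
        simp only [piv_iff, h1]
        simp only [Bool.false_eq_true]
        tauto
      · have h1 := upd_self ω e _ h
        simp only [piv_iff, h1, hA0] at this ⊢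
        tauto
    · rintro ω ⟨h, h1⟩ ⟨h2, h3⟩
      simp only [piv_iff, upd_self ω e _ h3] at h1
      tauto
  have e4 : mass w A0 =
      mass w (fun ω => A0 ω ∧ ω e = true) + mass w (fun ω => A0 ω ∧ ω e = false) := by
    apply mass_add
    · intro ω; cases ω e <;> simp
    · intro ω h; simp [h.2]
  have hf : mass w A0 * mass w (fun ω => ω e = true) ≤
      mass w (fun _ => True) * mass w (fun ω => A0 ω ∧ ω e = true) := by
    apply mass_fkg hy hq
    · intro ω η h h1; exact hA _ _ (upd_mono h e false) h1
    · intro ω η h h1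
      have := h e
      rw [h1] at this
      exact bool_of_true_le this
  have hfl : mass w (fun ω => ω e = true) ≤ y e.1 * mass w (fun ω => ω e = false) :=
    mass_flip hy hq e
  have hp : 0 ≤ mass w (fun ω => ω ∈ A ∧ Pivotal A e ω) := by
    refine Finset.sum_nonneg fun ω _ => ?_
    have := weight_pos hy hq ω
    split_ifs
    · exact this.le
    · exact le_rfl
  have hye := hy _ e.2
  rw [e4, e1] at hf
  rw [e2, e3, e1]
  generalize mass w (fun ω => ω e = true) = N1 at *
  generalize mass w (fun ω => ω e = false) = N0 at *
  generalize mass w (fun ω => A0 ω ∧ ω e = true) = b at *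
  generalize mass w (fun ω => A0 ω ∧ ω e = false) = c at *
  generalize mass w (fun ω => ω ∈ A ∧ Pivotal A e ω) = d at *
  have i1 : c * N1 ≤ N0 * b := by linarith
  have i2 : (N1 + N0) * d ≤ (1 + y e.1) * N0 * d :=
    mul_le_mul_of_nonneg_right (by linarith) hp
  have i3 := mul_le_mul_of_nonneg_left i1 (by linarith : 0 ≤ 1 + y e.1)
  nlinarith

lemma probOf_eq (E E' : Finset (Sym2 V)) (x : Sym2 V → ℝ) (q s : ℝ) (A : Set (Config E)) :
    probOf E E' x q s A = mass (weight E (modWeights E' x s) q) (fun ω => ω ∈ A) /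
      mass (weight E (modWeights E' x s) q) (fun _ => True) := by
  unfold probOf mass prob Z
  rw [Finset.sum_div]
  refine Finset.sum_congr rfl fun ω _ => ?_
  split_ifs <;> simp

lemma mass_pos {E : Finset (Sym2 V)} {y : Sym2 V → ℝ} (hy : ∀ e ∈ E, 0 < y e) {q : ℝ}
    (hq : 1 ≤ q) (B : Config E → Prop) (hB : ∃ ω, B ω) : 0 < mass (weight E y q) B := by
  obtain ⟨ω, h⟩ := hB
  refine Finset.sum_pos' (fun η _ => ?_) ⟨ω, Finset.mem_univ _, ?_⟩
  · have := weight_pos hy hq η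
    split_ifs
    · exact this.le
    · exact le_rfl
  · simp [h, weight_pos hy hq ω]

lemma condPiv_eq {E E' : Finset (Sym2 V)} {x : Sym2 V → ℝ} {q s : ℝ} (A : Set (Config E))
    (hne : mass (weight E (modWeights E' x s) q) (fun _ => True) ≠ 0)
    (e : {e : Sym2 V // e ∈ E}) :
    condPiv E E' x q s A e =
      mass (weight E (modWeights E' x s) q) (fun ω => ω ∈ A ∧ Pivotal A e ω) /
      mass (weight E (modWeights E' x s) q) (fun ω => ω ∈ A) := by
  unfold condPiv
  rw [probOf_eq]
  have : (∑ ω : Config E,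
      (if ω ∈ A ∧ Pivotal A e ω then prob E (modWeights E' x s) q ω else 0)) =
      mass (weight E (modWeights E' x s) q) (fun ω => ω ∈ A ∧ Pivotal A e ω) /
      mass (weight E (modWeights E' x s) q) (fun _ => True) := by
    unfold mass prob Z
    rw [Finset.sum_div]
    refine Finset.sum_congr rfl fun ω _ => ?_
    split_ifs <;> simp
  rw [this, div_div_div_cancel_right₀ hne]

lemma weight_hasDeriv (E E' : Finset (Sym2 V)) (x : Sym2 V → ℝ) (q s : ℝ) (hs : 0 < s)
    (ω : Config E) :
    HasDerivAt (fun s => weight E (modWeights E' x s) q ω)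
      ((1 / s) * ∑ e : {e : Sym2 V // e ∈ E}, if e.1 ∈ E' then
        (if ω e = true then weight E (modWeights E' x s) q ω else 0) else 0) s := by
  unfold weight
  have h1 : ∀ e ∈ (Finset.univ : Finset {e : Sym2 V // e ∈ E}),
      HasDerivAt (fun s => if ω e = true then modWeights E' x s e.1 else 1)
        ((if ω e = true then modWeights E' x s e.1 else 1) *
          (if e.1 ∈ E' then (if ω e = true then 1 / s else 0) else 0)) s := by
    intro e _
    unfold modWeights
    by_cases h : ω e = true <;> by_cases h' : e.1 ∈ E' <;> simp only [h, h', if_true, if_false]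
    · have h3 : s * (1 / s) = 1 := by field_simp
      rw [h3]
      exact hasDerivAt_id s
    · simpa using hasDerivAt_const s (x e.1)
    · simpa using hasDerivAt_const s (1 : ℝ)
    · simpa using hasDerivAt_const s (1 : ℝ)
  have h2 := (HasDerivAt.fun_finsetProd h1).const_mul (q ^ kappa ω)
  refine h2.congr_deriv (Eq.symm ?_)
  rw [Finset.mul_sum, Finset.mul_sum]
  refine Finset.sum_congr rfl fun e he => ?_
  rw [smul_eq_mul, ← mul_assoc (∏ _ ∈ _, _), Finset.prod_erase_mul _ _ he]
  split_ifs <;> ring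

lemma mass_hasDeriv (E E' : Finset (Sym2 V)) (x : Sym2 V → ℝ) (q s : ℝ) (hs : 0 < s)
    (B : Config E → Prop) :
    HasDerivAt (fun s => mass (weight E (modWeights E' x s) q) B)
      ((1 / s) * ∑ e : {e : Sym2 V // e ∈ E}, if e.1 ∈ E' then
        mass (weight E (modWeights E' x s) q) (fun ω => B ω ∧ ω e = true) else 0) s := by
  have h1 : ∀ ω ∈ (Finset.univ : Finset (Config E)),
      HasDerivAt (fun s => if B ω then weight E (modWeights E' x s) q ω else 0)
      (if B ω then ((1 / s) * ∑ e : {e : Sym2 V // e ∈ E}, if e.1 ∈ E' then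
        (if ω e = true then weight E (modWeights E' x s) q ω else 0) else 0) else 0) s := by
    intro ω _
    by_cases h : B ω
    · simpa only [h, if_true] using weight_hasDeriv E E' x q s hs ω
    · simpa only [h, if_false] using hasDerivAt_const s (0 : ℝ)
  refine (HasDerivAt.fun_sum h1).congr_deriv (Eq.symm ?_)
  have h3 : ∀ e : {e : Sym2 V // e ∈ E}, (if e.1 ∈ E' then
      mass (weight E (modWeights E' x s) q) (fun ω => B ω ∧ ω e = true) else 0) =
      ∑ ω : Config E, if B ω then (if e.1 ∈ E' then
        (if ω e = true then weight E (modWeights E' x s) q ω else 0) else 0) else 0 := by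
    intro e
    by_cases he : e.1 ∈ E'
    · simp only [he, if_true]
      refine Finset.sum_congr rfl fun ω _ => ?_
      by_cases h : B ω <;> by_cases h' : ω e = true <;> simp [h, h']
    · simp [he]
  rw [Finset.sum_congr rfl fun e _ => h3 e, Finset.sum_comm, Finset.mul_sum]
  refine Finset.sum_congr rfl fun ω _ => ?_
  by_cases h : B ω
  · simp only [h, if_true]
  · simp [h]

lemma modWeights_pos {E E' : Finset (Sym2 V)} {x : Sym2 V → ℝ} (hx : ∀ e ∈ E, 0 < x e) {s : ℝ}
    (hs : 0 < s) : ∀ e ∈ E, 0 < modWeights E' x s e := by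
  intro e he
  unfold modWeights
  split_ifs
  · exact hs
  · exact hx e he

end RandomCluster

open RandomCluster in
theorem stmt2 {V : Type*} [Fintype V] [DecidableEq V] (E E' : Finset (Sym2 V)) (hE' : E' ⊆ E)
    (x : Sym2 V → ℝ) (hx : ∀ e ∈ E, 0 < x e) (q : ℝ) (hq : 1 ≤ q)
    (A : Set (Config E)) (hA : A.Nonempty) (hAinc : Increasing A)
    (s₁ s₂ : ℝ) (hs₁ : 0 < s₁) (hs : s₁ < s₂) :
    probOf E E' x q s₂ A / probOf E E' x q s₁ A ≥
      Real.exp (∫ s in s₁..s₂,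
        (1 / (s * (1 + s))) *
          ∑ e : {e : Sym2 V // e ∈ E}, (if e.1 ∈ E' then condPiv E E' x q s A e else 0)) := by
  have hpT : ∀ s, 0 < s → 0 < mass (weight E (modWeights E' x s) q) (fun _ => True) :=
    fun s h => mass_pos (modWeights_pos hx h) hq _ ⟨hA.some, trivial⟩
  have hpA : ∀ s, 0 < s → 0 < mass (weight E (modWeights E' x s) q) (fun ω => ω ∈ A) :=
    fun s h => mass_pos (modWeights_pos hx h) hq _ hA
  have hs₂ : 0 < s₂ := hs₁.trans hs
  have hP : ∀ s, 0 < s → 0 < probOf E E' x q s A := by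
    intro s h
    rw [probOf_eq]
    exact div_pos (hpA s h) (hpT s h)
  have hdP : ∀ s, 0 < s → HasDerivAt
      (fun s => Real.log (mass (weight E (modWeights E' x s) q) (fun ω => ω ∈ A)) -
        Real.log (mass (weight E (modWeights E' x s) q) (fun _ => True))) _ s :=
    fun s h => ((mass_hasDeriv E E' x q s h (fun ω => ω ∈ A)).log (hpA s h).ne').sub
      ((mass_hasDeriv E E' x q s h (fun _ => True)).log (hpT s h).ne')
  have hlog : ∀ s, 0 < s → Real.log (probOf E E' x q s A) =
      Real.log (mass (weight E (modWeights E' x s) q) (fun ω => ω ∈ A)) -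
        Real.log (mass (weight E (modWeights E' x s) q) (fun _ => True)) := by
    intro s h
    rw [probOf_eq, Real.log_div (hpA s h).ne' (hpT s h).ne']
  have hpos : ∀ s ∈ Set.Icc s₁ s₂, 0 < s := fun s h => hs₁.trans_le h.1
  rw [ge_iff_le, ← Real.le_log_iff_exp_le (div_pos (hP _ hs₂) (hP _ hs₁)),
    Real.log_div (hP _ hs₂).ne' (hP _ hs₁).ne', hlog _ hs₂, hlog _ hs₁]
  refine intervalIntegral.integral_le_sub_of_hasDeriv_right_of_le hs.le
    (fun s h => (hdP s (hpos s h)).continuousAt.continuousWithinAt)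
    (fun s h => (hdP s (hs₁.trans h.1)).hasDerivWithinAt) ?_ ?_
  · apply ContinuousOn.integrableOn_Icc
    apply ContinuousOn.mul
    · refine ContinuousOn.div continuousOn_const (by fun_prop) ?_
      intro s h
      have := hpos s h
      positivity
    · refine continuousOn_finsetSum _ fun e _ => ?_
      by_cases he : e.1 ∈ E'
      · simp only [he, if_true]
        have : ContinuousOn (fun s =>
            mass (weight E (modWeights E' x s) q) (fun ω => ω ∈ A ∧ Pivotal A e ω) /
            mass (weight E (modWeights E' x s) q) (fun ω => ω ∈ A)) (Set.Icc s₁ s₂) := by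
          refine ContinuousOn.div
            (fun s h => (mass_hasDeriv E E' x q s (hpos s h) _).continuousAt.continuousWithinAt)
            (fun s h => (mass_hasDeriv E E' x q s (hpos s h) _).continuousAt.continuousWithinAt)
            (fun s h => (hpA s (hpos s h)).ne')
        exact this.congr fun s h => condPiv_eq A (hpT s (hpos s h)).ne' e
      · simp only [he, if_false]
        exact continuousOn_const
  · intro s hs'
    have h0 : 0 < s := hs₁.trans hs'.1
    have hT := hpT s h0
    have hAp := hpA s h0
    rw [mul_div_assoc, mul_div_assoc, ← mul_sub, Finset.sum_div, Finset.sum_div,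
      ← Finset.sum_sub_distrib, one_div_mul_eq_div, one_div_mul_eq_div, div_mul_eq_div_div_swap]
    apply div_le_div_of_nonneg_right _ h0.le
    rw [Finset.sum_div]
    refine Finset.sum_le_sum fun e _ => ?_
    by_cases he : e.1 ∈ E'
    · simp only [he, if_true, true_and]
      rw [condPiv_eq A hT.ne' e]
      have h1 := edge_ineq (modWeights_pos (E' := E') hx h0) hq A hAinc e
      have h2 : modWeights E' x s e.1 = s := by simp [modWeights, he]
      rw [h2] at h1
      rw [div_sub_div _ _ hAp.ne' hT.ne', div_div, div_le_div_iff₀ (by positivity) (by positivity)]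
      nlinarith [mul_le_mul_of_nonneg_left h1 hAp.le]
    · simp [he]
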